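/- Let A ⊆ ω not be low for Martin-Löf randomness, P a Π⁰₁ class, τ a finite binary string, and Q a Π⁰₁(A) class containing only A-random sequences. If d(τ,P) ≥ δ > 0, then there exists a string ρ extending τ such that: (1) [ρ] ⊄ Q in the sense that ρ is enumerated out of Q (ρ ∉ Q as a string condition); (2) d(ρ,P) ≥ δ/2. -/

import Mathlib

open MeasureTheory ENNReal

/-! ### Cantor space and the uniform (coin-flipping) measure -/

/-- The binary digits of a real number in `[0,1)`, giving a point of Cantor space. -/
noncomputable def binaryDigits (x : ℝ) : ℕ → Bool :=
  fun n => decide (⌊x * 2 ^ (n + 1)⌋ % 2 = 1)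

/-- The uniform (Lebesgue / coin-flipping) measure on Cantor space `2^ω`,
obtained as the pushforward of Lebesgue measure on `[0,1)` under binary expansion. -/
noncomputable def μCantor : Measure (ℕ → Bool) :=
  Measure.map binaryDigits (volume.restrict (Set.Ico (0 : ℝ) 1))

/-- `σ` is an initial segment of the infinite sequence `X`. -/
def IsPrefixOf (σ : List Bool) (X : ℕ → Bool) : Prop :=
  ∀ i : Fin σ.length, X i = σ.get i

/-- The cylinder determined by a finite binary string. -/
def cylinder (σ : List Bool) : Set (ℕ → Bool) := {X | IsPrefixOf σ X}

/-- The open set generated by a set of finite binary strings. -/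
def openOf (S : Set (List Bool)) : Set (ℕ → Bool) := ⋃ σ ∈ S, cylinder σ

/-- The density of a set `P` above the string `τ`: `μ([τ] ∩ P) · 2^{|τ|}`. -/
noncomputable def dens (τ : List Bool) (P : Set (ℕ → Bool)) : ℝ≥0∞ :=
  μCantor (cylinder τ ∩ P) * 2 ^ τ.length

/-- The length-`n` initial segment of `X`, as a finite binary string. -/
def strPrefix (X : ℕ → Bool) (n : ℕ) : List Bool := (List.range n).map X

/-- A set of strings is prefix-free if no element is a proper prefix of another. -/
def PrefixFreeSet (S : Set (List Bool)) : Prop :=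
  ∀ σ ∈ S, ∀ τ ∈ S, σ <+: τ → σ = τ

/-- The weight `∑_{σ ∈ S} 2^{-|σ|}` of a set of strings. -/
noncomputable def weight (S : Set (List Bool)) : ℝ≥0∞ :=
  ∑' σ : S, 2⁻¹ ^ (σ : List Bool).length

/-- A set of strings is bounded if its weight is finite. -/
def BoundedStr (S : Set (List Bool)) : Prop := weight S < ⊤

/-- The tail `X(·+k)` of an infinite binary sequence. -/
def tailSeq (X : ℕ → Bool) (k : ℕ) : ℕ → Bool := fun n => X (n + k)

/-! ### Oracle computability -/

/-- The `e`-th computably enumerable set of naturals (the domain of the `e`-th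
partial computable function). -/
def WEnum (e n : ℕ) : Prop := ((Denumerable.ofNat Nat.Partrec.Code e).eval n).Dom

/-- `OracleComputes e X n m` holds if the `e`-th Turing functional with oracle `X`
outputs `m` on input `n`; a Turing functional is presented by the c.e. set `W_e`
of coded axioms `(σ, n, m)`, and `Γ_e^X(n) = m` iff some initial segment `σ` of `X`
has `(σ, n, m) ∈ W_e`. -/
def OracleComputes (e : ℕ) (X : ℕ → Bool) (n m : ℕ) : Prop :=
  ∃ σ : List Bool, IsPrefixOf σ X ∧
    WEnum e (Nat.pair (Encodable.encode σ) (Nat.pair n m))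

def natOfBool (b : Bool) : ℕ := cond b 1 0

/-- `f : ℕ → ℕ` is computable with oracle `A`: some Turing functional with oracle `A`
has graph exactly `f`. -/
def FnComputableIn (f : ℕ → ℕ) (A : ℕ → Bool) : Prop :=
  ∃ e, ∀ n m, OracleComputes e A n m ↔ m = f n

/-- Turing reducibility `B ≤_T A` for subsets of `ω` (as elements of Cantor space). -/
def TuringLE (B A : ℕ → Bool) : Prop := FnComputableIn (fun n => natOfBool (B n)) A

/-- Turing equivalence. -/
def TuringEquiv (A B : ℕ → Bool) : Prop := TuringLE A B ∧ TuringLE B A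

/-- The Turing join `A ⊕ B`. -/
def joinSet (A B : ℕ → Bool) : ℕ → Bool :=
  fun n => if n % 2 = 0 then A (n / 2) else B (n / 2)

open Classical in
/-- The Turing jump `A′ = {e : Γ_e^A(e)↓}`. -/
noncomputable def jump (A : ℕ → Bool) : ℕ → Bool :=
  fun e => decide (∃ m, OracleComputes e A e m)

/-- The empty oracle. -/
def emptyOracle : ℕ → Bool := fun _ => false

/-- The halting problem `∅′`. -/
noncomputable def zeroJump : ℕ → Bool := jump emptyOracle

/-- A set is computable iff it is Turing reducible to the empty oracle. -/
def ComputableSet (A : ℕ → Bool) : Prop := TuringLE A emptyOracle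

/-- A set of naturals is c.e. in `A`. -/
def CeIn (A : ℕ → Bool) (S : Set ℕ) : Prop :=
  ∃ e, ∀ n, n ∈ S ↔ ∃ m, OracleComputes e A n m

/-- A set of strings is c.e. in `A`. -/
def CeStrIn (A : ℕ → Bool) (S : Set (List Bool)) : Prop :=
  ∃ e, ∀ σ : List Bool, σ ∈ S ↔ ∃ m, OracleComputes e A (Encodable.encode σ) m

/-- A c.e. set of strings. -/
def CeStr (S : Set (List Bool)) : Prop := CeStrIn emptyOracle S

/-! ### Π⁰₁ classes, Martin-Löf randomness, K-triviality -/

/-- A `Π⁰₁(A)` class: the complement of the union of cylinders over an `A`-c.e.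
set of strings. -/
def Pi01In (A : ℕ → Bool) (P : Set (ℕ → Bool)) : Prop :=
  ∃ S : Set (List Bool), CeStrIn A S ∧ P = (openOf S)ᶜ

/-- A `Π⁰₁` class. -/
def Pi01 (P : Set (ℕ → Bool)) : Prop := Pi01In emptyOracle P

/-- The `n`-th level of the `e`-th `A`-effective sequence of open sets. -/
def testLevel (e : ℕ) (A : ℕ → Bool) (n : ℕ) : Set (ℕ → Bool) :=
  openOf {σ | ∃ m, OracleComputes e A (Nat.pair n (Encodable.encode σ)) m}

/-- A Martin-Löf test relative to `A`: a uniformly `A`-c.e. sequence of open sets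
`G n` with `μ(G n) ≤ 2^{-n}`. -/
def MLTestIn (A : ℕ → Bool) (G : ℕ → Set (ℕ → Bool)) : Prop :=
  (∃ e, ∀ n, G n = testLevel e A n) ∧ ∀ n, μCantor (G n) ≤ 2⁻¹ ^ n

/-- `X` is Martin-Löf random relative to `A`: it passes every `A`-Martin-Löf test. -/
def MLRandomIn (A X : ℕ → Bool) : Prop :=
  ∀ G : ℕ → Set (ℕ → Bool), MLTestIn A G → ∃ n, X ∉ G n

/-- `X` is Martin-Löf random. -/
def MLRandom (X : ℕ → Bool) : Prop := MLRandomIn emptyOracle X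

/-- The domain of the `e`-th machine, viewed as a set of binary strings. -/
def machineDom (e : ℕ) : Set (List Bool) :=
  {σ | ((Denumerable.ofNat Nat.Partrec.Code e).eval (Encodable.encode σ)).Dom}

/-- The `e`-th machine is prefix-free. -/
def PrefixFreeMachine (e : ℕ) : Prop := PrefixFreeSet (machineDom e)

/-- Prefix-free Kolmogorov complexity (defined, up to an additive constant, as the
least `|σ| + 2e + 2` over prefix-free machines `e` and programs `σ` producing `x`). -/
noncomputable def Kcpx (x : ℕ) : ℕ :=
  sInf {k | ∃ e, ∃ σ : List Bool, PrefixFreeMachine e ∧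
    x ∈ (Denumerable.ofNat Nat.Partrec.Code e).eval (Encodable.encode σ) ∧
    k = σ.length + 2 * e + 2}

/-- `K(n)` means `K(1^n)`. -/
noncomputable def KofNat (n : ℕ) : ℕ := Kcpx (Encodable.encode (List.replicate n true))

/-- `A` is K-trivial: `K(A↾n) ≤ K(n) + c` for some constant `c`. -/
def KTrivial (A : ℕ → Bool) : Prop :=
  ∃ c, ∀ n, Kcpx (Encodable.encode (strPrefix A n)) ≤ KofNat n + c

/-!
Let `X` be random but not `A`-random. Adding a finite prefix preserves `A`-randomness, so no tail
of `X` is `A`-random and hence no tail lies in `Q`. For rational `q` with `δ / 2 < q < δ`, the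
points of `[τ]` all of whose initial segments extending `τ` have density at least `q` in `P` form a
`Π⁰₁` class. It is not null: otherwise the strings extending `τ` of density below `q` would cover
almost all of `P` above `τ`, forcing `dens τ P ≤ q`. By Kučera's theorem some tail `Y` of `X` lies
in this class, and as `Q` is closed and omits `Y`, a long enough initial segment of `Y` is the
required `ρ`.
-/

/-! ### Strings and cylinders -/

section Strings

variable {X : ℕ → Bool} {σ τ : List Bool} {S : Set (List Bool)}

@[simp]
lemma length_strPrefix (X : ℕ → Bool) (n : ℕ) : (strPrefix X n).length = n := by
  simp [strPrefix]

lemma take_strPrefix (X : ℕ → Bool) {m n : ℕ} (h : m ≤ n) :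
    (strPrefix X n).take m = strPrefix X m := by
  simp only [strPrefix, ← List.map_take, List.take_range, min_eq_left h]

lemma strPrefix_prefix_strPrefix (X : ℕ → Bool) {m n : ℕ} (h : m ≤ n) :
    strPrefix X m <+: strPrefix X n :=
  take_strPrefix X h ▸ List.take_prefix _ _

lemma strPrefix_add (X : ℕ → Bool) (m n : ℕ) :
    strPrefix X (m + n) = strPrefix X m ++ strPrefix (tailSeq X m) n := by
  simp [strPrefix, List.range_add, tailSeq, add_comm]

lemma tailSeq_tailSeq (X : ℕ → Bool) (m n : ℕ) :
    tailSeq (tailSeq X m) n = tailSeq X (n + m) := by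
  funext i
  simp only [tailSeq, add_assoc]

lemma mem_cylinder_iff_strPrefix_eq : X ∈ cylinder σ ↔ strPrefix X σ.length = σ := by
  simp [_root_.cylinder, IsPrefixOf, Fin.forall_iff, strPrefix, List.ext_get_iff]

lemma mem_cylinder_strPrefix (X : ℕ → Bool) (n : ℕ) : X ∈ cylinder (strPrefix X n) := by
  rw [mem_cylinder_iff_strPrefix_eq, length_strPrefix]

lemma mem_cylinder_append :
    X ∈ cylinder (σ ++ τ) ↔ X ∈ cylinder σ ∧ tailSeq X σ.length ∈ cylinder τ := by
  simp only [mem_cylinder_iff_strPrefix_eq, List.length_append, strPrefix_add]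
  exact List.append_eq_append_iff_of_size_eq_left (by simp)

lemma cylinder_subset_cylinder (h : σ <+: τ) : cylinder τ ⊆ cylinder σ := by
  obtain ⟨ν, rfl⟩ := h
  exact fun X hX => (mem_cylinder_append.1 hX).1

lemma prefix_of_mem_cylinder (hσ : X ∈ cylinder σ) (hτ : X ∈ cylinder τ)
    (h : σ.length ≤ τ.length) : σ <+: τ := by
  rw [mem_cylinder_iff_strPrefix_eq] at hσ hτ
  rw [← hσ, ← hτ]
  exact strPrefix_prefix_strPrefix X h

lemma prefix_strPrefix_iff {n : ℕ} (h : σ.length ≤ n) :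
    σ <+: strPrefix X n ↔ X ∈ cylinder σ :=
  ⟨fun hσ => cylinder_subset_cylinder hσ (mem_cylinder_strPrefix X n),
    fun hX => prefix_of_mem_cylinder hX (mem_cylinder_strPrefix X n) (by simpa using h)⟩

lemma disjoint_cylinder (h : ¬ σ <+: τ) (h' : ¬ τ <+: σ) :
    Disjoint (cylinder σ) (cylinder τ) := by
  rw [Set.disjoint_left]
  intro X hσ hτ
  rcases le_total σ.length τ.length with hl | hl
  · exact h (prefix_of_mem_cylinder hσ hτ hl)
  · exact h' (prefix_of_mem_cylinder hτ hσ hl)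

lemma mem_openOf : X ∈ openOf S ↔ ∃ σ ∈ S, X ∈ cylinder σ := by
  simp [openOf]

lemma mem_openOf_iff_strPrefix : X ∈ openOf S ↔ ∃ n, strPrefix X n ∈ S := by
  simp only [mem_openOf, mem_cylinder_iff_strPrefix_eq]
  exact ⟨fun ⟨σ, hσ, h⟩ => ⟨σ.length, h.symm ▸ hσ⟩, fun ⟨n, hn⟩ => ⟨_, hn, by simp⟩⟩

lemma openOf_union (S T : Set (List Bool)) : openOf (S ∪ T) = openOf S ∪ openOf T :=
  Set.biUnion_union S T cylinder

lemma mem_openOf_append_image :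
    X ∈ openOf ((σ ++ ·) '' S) ↔ X ∈ cylinder σ ∧ tailSeq X σ.length ∈ openOf S := by
  simp only [mem_openOf, Set.exists_mem_image, mem_cylinder_append]
  tauto

/-- The elements of `S` that have no proper prefix in `S`; they form a prefix-free set generating
the same open set as `S`. -/
def minStr (S : Set (List Bool)) : Set (List Bool) :=
  {σ | σ ∈ S ∧ ∀ n < σ.length, σ.take n ∉ S}

lemma prefixFreeSet_minStr (S : Set (List Bool)) : PrefixFreeSet (minStr S) := by
  rintro σ hσ _ hτ ⟨ν, rfl⟩
  by_contra hne
  have hlen : σ.length < (σ ++ ν).length := by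
    simpa [List.length_pos_iff] using hne
  exact hτ.2 _ hlen (by simpa using hσ.1)

lemma openOf_minStr (S : Set (List Bool)) : openOf (minStr S) = openOf S := by
  classical
  ext X
  simp only [mem_openOf_iff_strPrefix]
  refine ⟨fun ⟨n, hn⟩ => ⟨n, hn.1⟩, fun h => ⟨Nat.find h, Nat.find_spec h, fun m hm => ?_⟩⟩
  rw [length_strPrefix] at hm
  rw [take_strPrefix X hm.le]
  exact Nat.find_min h hm

lemma PrefixFreeSet.pairwiseDisjoint_cylinder (hS : PrefixFreeSet S) :
    S.PairwiseDisjoint cylinder :=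
  fun σ hσ τ hτ hne =>
    disjoint_cylinder (hne <| hS σ hσ τ hτ ·) (hne.symm <| hS τ hτ σ hσ ·)

lemma PrefixFreeSet.append_image (hS : PrefixFreeSet S) (σ : List Bool) :
    PrefixFreeSet ((σ ++ ·) '' S) := by
  rintro _ ⟨ν, hν, rfl⟩ _ ⟨ν', hν', rfl⟩ h
  rw [hS ν hν ν' hν' ((List.prefix_append_right_inj σ).1 h)]

lemma isOpen_cylinder (σ : List Bool) : IsOpen (cylinder σ) := by
  have : cylinder σ = ⋂ i : Fin σ.length, (fun X : ℕ → Bool => X i) ⁻¹' {σ.get i} := by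
    ext X
    simp [_root_.cylinder, IsPrefixOf]
  rw [this]
  exact isOpen_iInter_of_finite fun i => (isOpen_discrete _).preimage (continuous_apply (i : ℕ))

lemma isOpen_openOf (S : Set (List Bool)) : IsOpen (openOf S) :=
  isOpen_biUnion fun σ _ => isOpen_cylinder σ

lemma exists_cylinder_strPrefix_inter_eq_empty {Q : Set (ℕ → Bool)} (hQ : IsClosed Q)
    (hX : X ∉ Q) : ∃ n, cylinder (strPrefix X n) ∩ Q = ∅ := by
  obtain ⟨n, hn⟩ := PiNat.exists_disjoint_cylinder hQ hX
  have : cylinder (strPrefix X n) = PiNat.cylinder X n := by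
    ext Y
    simp [_root_.cylinder, IsPrefixOf, Fin.forall_iff, strPrefix]
  exact ⟨n, by rw [this]; exact hn.symm.inter_eq⟩

lemma Pi01In.isClosed {A : ℕ → Bool} {P : Set (ℕ → Bool)} (hP : Pi01In A P) : IsClosed P := by
  obtain ⟨S, -, rfl⟩ := hP
  exact (isOpen_openOf S).isClosed_compl

end Strings

/-! ### The uniform measure on cylinders and open sets -/

lemma two_inv_pow_mul_two_pow (n : ℕ) : (2⁻¹ : ℝ≥0∞) ^ n * 2 ^ n = 1 := by
  rw [← mul_pow, ENNReal.inv_mul_cancel (by simp) (by simp), one_pow]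

lemma measurable_binaryDigits : Measurable binaryDigits :=
  measurable_pi_iff.2 fun n =>
    (measurable_of_countable fun k : ℤ => decide (k % 2 = 1)).comp
      (Int.measurable_floor.comp (measurable_id.mul_const ((2 : ℝ) ^ (n + 1))))

instance : IsProbabilityMeasure μCantor :=
  have : IsProbabilityMeasure (volume.restrict (Set.Ico (0 : ℝ) 1)) := ⟨by simp⟩
  Measure.isProbabilityMeasure_map measurable_binaryDigits.aemeasurable

/-- The natural number whose binary expansion, most significant digit first, is `σ`; the reals
whose digits extend `σ` are those in `[strValue σ / 2^{|σ|}, (strValue σ + 1) / 2^{|σ|})`. -/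
def strValue (σ : List Bool) : ℕ :=
  σ.foldl (fun v b => 2 * v + natOfBool b) 0

lemma strValue_append_singleton (σ : List Bool) (b : Bool) :
    strValue (σ ++ [b]) = 2 * strValue σ + natOfBool b := by
  simp [strValue]

lemma strValue_lt (σ : List Bool) : strValue σ < 2 ^ σ.length := by
  induction σ using List.reverseRecOn with
  | nil => simp [strValue]
  | append_singleton σ b ih =>
    have : natOfBool b ≤ 1 := by cases b <;> simp [natOfBool]
    rw [strValue_append_singleton, List.length_append, List.length_singleton, pow_succ]
    omega

lemma floor_mul_two_pow_succ (x : ℝ) (n : ℕ) :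
    ⌊x * 2 ^ (n + 1)⌋ = 2 * ⌊x * 2 ^ n⌋ + natOfBool (binaryDigits x n) := by
  have half : ⌊x * 2 ^ n⌋ = ⌊x * 2 ^ (n + 1)⌋ / 2 := by
    rw [show x * 2 ^ n = x * 2 ^ (n + 1) / (2 : ℕ) by push_cast; ring, Int.floor_div_natCast]
    rfl
  rw [half]
  by_cases h : ⌊x * 2 ^ (n + 1)⌋ % 2 = 1 <;> simp [binaryDigits, natOfBool, h] <;> omega

lemma binaryDigits_mem_cylinder_iff_floor {x : ℝ} (hx : x ∈ Set.Ico (0 : ℝ) 1) (σ : List Bool) :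
    binaryDigits x ∈ cylinder σ ↔ ⌊x * 2 ^ σ.length⌋ = strValue σ := by
  induction σ using List.reverseRecOn with
  | nil =>
    simpa [mem_cylinder_iff_strPrefix_eq, strPrefix, strValue] using hx
  | append_singleton σ b ih =>
    have digit : tailSeq (binaryDigits x) σ.length ∈ cylinder [b] ↔
        binaryDigits x σ.length = b := by
      simp [mem_cylinder_iff_strPrefix_eq, strPrefix, tailSeq]
    rw [mem_cylinder_append, ih, digit, List.length_append, List.length_singleton,
      floor_mul_two_pow_succ, strValue_append_singleton]
    cases binaryDigits x σ.length <;> cases b <;> simp [natOfBool] <;> omega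

lemma preimage_binaryDigits_cylinder (σ : List Bool) :
    binaryDigits ⁻¹' cylinder σ ∩ Set.Ico 0 1 =
      Set.Ico ((strValue σ : ℝ) / 2 ^ σ.length) ((strValue σ + 1) / 2 ^ σ.length) := by
  have hpos : (0 : ℝ) < 2 ^ σ.length := by positivity
  have hlt : (strValue σ : ℝ) + 1 ≤ 2 ^ σ.length := by exact_mod_cast strValue_lt σ
  have mem_Ico_iff (x : ℝ) : x ∈ Set.Ico ((strValue σ : ℝ) / 2 ^ σ.length)
      ((strValue σ + 1) / 2 ^ σ.length) ↔ ⌊x * 2 ^ σ.length⌋ = strValue σ := by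
    rw [Set.mem_Ico, div_le_iff₀ hpos, lt_div_iff₀ hpos, Int.floor_eq_iff, Int.cast_natCast]
  have subset_unit : Set.Ico ((strValue σ : ℝ) / 2 ^ σ.length)
      ((strValue σ + 1) / 2 ^ σ.length) ⊆ Set.Ico 0 1 :=
    Set.Ico_subset_Ico (by positivity) ((div_le_one hpos).2 hlt)
  ext x
  refine ⟨fun ⟨h, hx⟩ => ?_, fun h => ⟨?_, subset_unit h⟩⟩
  · exact (mem_Ico_iff x).2 ((binaryDigits_mem_cylinder_iff_floor hx σ).1 h)
  · exact (binaryDigits_mem_cylinder_iff_floor (subset_unit h) σ).2 ((mem_Ico_iff x).1 h)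

lemma measure_cylinder (σ : List Bool) : μCantor (cylinder σ) = 2⁻¹ ^ σ.length := by
  have hσ : MeasurableSet (binaryDigits ⁻¹' cylinder σ) :=
    measurable_binaryDigits (isOpen_cylinder σ).measurableSet
  rw [μCantor, Measure.map_apply measurable_binaryDigits (isOpen_cylinder σ).measurableSet,
    Measure.restrict_apply hσ, preimage_binaryDigits_cylinder, Real.volume_Ico, ← sub_div,
    add_sub_cancel_left, one_div, ← inv_pow, ENNReal.ofReal_pow (by positivity),
    ENNReal.ofReal_inv_of_pos two_pos, ENNReal.ofReal_ofNat]

lemma measure_openOf {S : Set (List Bool)} (hS : PrefixFreeSet S) :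
    μCantor (openOf S) = weight S := by
  rw [openOf, measure_biUnion S.to_countable hS.pairwiseDisjoint_cylinder
    fun σ _ => (isOpen_cylinder σ).measurableSet]
  simp only [measure_cylinder, weight]

lemma measure_openOf_append_image (σ : List Bool) (S : Set (List Bool)) :
    μCantor (openOf ((σ ++ ·) '' S)) = 2⁻¹ ^ σ.length * μCantor (openOf S) := by
  have reduce : openOf ((σ ++ ·) '' S) = openOf ((σ ++ ·) '' minStr S) := by
    ext X
    rw [mem_openOf_append_image, mem_openOf_append_image, openOf_minStr]
  have hmin := prefixFreeSet_minStr S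
  rw [reduce, measure_openOf (hmin.append_image σ), ← openOf_minStr S, measure_openOf hmin,
    weight, weight, tsum_image (fun ν : List Bool => (2⁻¹ : ℝ≥0∞) ^ ν.length)
      (List.append_right_injective σ).injOn, ← ENNReal.tsum_mul_left]
  simp only [List.length_append, pow_add]

lemma measure_openOf_mul_le (L M : Language Bool) :
    μCantor (openOf (L * M)) ≤ weight L * μCantor (openOf M) := by
  have cover : openOf (L * M) ⊆ ⋃ σ ∈ (L : Set (List Bool)), openOf ((σ ++ ·) '' M) := by
    intro X hX
    obtain ⟨_, ⟨σ, hσ, ν, hν, rfl⟩, hX⟩ := mem_openOf.1 hX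
    exact Set.mem_biUnion hσ (mem_openOf.2 ⟨σ ++ ν, ⟨ν, hν, rfl⟩, hX⟩)
  calc μCantor (openOf (L * M))
      ≤ ∑' σ : {σ // σ ∈ L}, μCantor (openOf ((σ ++ ·) '' M)) :=
        (measure_mono cover).trans (measure_biUnion_le _ (Set.to_countable _) _)
    _ = ∑' σ : {σ // σ ∈ L}, 2⁻¹ ^ σ.1.length * μCantor (openOf M) :=
        tsum_congr fun σ => measure_openOf_append_image σ.1 M
    _ = weight L * μCantor (openOf M) := ENNReal.tsum_mul_right

lemma measure_openOf_pow_le (L : Language Bool) (n : ℕ) :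
    μCantor (openOf (L ^ n)) ≤ weight L ^ n := by
  induction n with
  | zero => simpa only [pow_zero] using prob_le_one
  | succ n ih =>
    rw [pow_succ', pow_succ']
    exact (measure_openOf_mul_le L _).trans (by gcongr)

lemma tailSeq_mem_openOf_pow {X : ℕ → Bool} {L : Language Bool}
    (h : ∀ k, tailSeq X k ∈ openOf L) (n k : ℕ) : tailSeq X k ∈ openOf (L ^ n) := by
  induction n generalizing k with
  | zero => exact mem_openOf.2 ⟨[], by rw [pow_zero]; rfl, fun i => i.elim0⟩
  | succ n ih =>
    obtain ⟨σ, hσ, hX⟩ := mem_openOf.1 (h k)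
    obtain ⟨ν, hν, hX'⟩ := mem_openOf.1 (ih (σ.length + k))
    rw [← tailSeq_tailSeq] at hX'
    refine mem_openOf.2 ⟨σ ++ ν, ?_, mem_cylinder_append.2 ⟨hX, hX'⟩⟩
    rw [pow_succ']
    exact Language.append_mem_mul hσ hν

/-! ### Density -/

section Density

variable {σ : List Bool} {P : Set (ℕ → Bool)} {q : ℝ≥0∞}

lemma dens_ne_top (σ : List Bool) (P : Set (ℕ → Bool)) : dens σ P ≠ ⊤ :=
  ENNReal.mul_ne_top (measure_ne_top _ _) (ENNReal.pow_ne_top (by simp))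

lemma dens_mul_two_inv_pow (σ : List Bool) (P : Set (ℕ → Bool)) :
    dens σ P * 2⁻¹ ^ σ.length = μCantor (cylinder σ ∩ P) := by
  rw [dens, mul_assoc, mul_comm (2 ^ _), two_inv_pow_mul_two_pow, mul_one]

lemma dens_le_iff : dens σ P ≤ q ↔ μCantor (cylinder σ ∩ P) ≤ q * μCantor (cylinder σ) := by
  rw [measure_cylinder, ← dens_mul_two_inv_pow,
    ENNReal.mul_le_mul_iff_left (pow_ne_zero _ (by simp)) (ENNReal.pow_ne_top (by simp))]

lemma measure_openOf_inter_le {B : Set (List Bool)} (hB : ∀ σ ∈ B, dens σ P ≤ q) :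
    μCantor (openOf B ∩ P) ≤ q * μCantor (openOf B) := by
  rw [← openOf_minStr, measure_openOf (prefixFreeSet_minStr B)]
  calc μCantor (openOf (minStr B) ∩ P)
      ≤ ∑' σ : minStr B, μCantor (cylinder σ ∩ P) := by
        rw [openOf, Set.iUnion₂_inter]
        exact measure_biUnion_le _ (Set.to_countable _) _
    _ ≤ ∑' σ : minStr B, q * 2⁻¹ ^ (σ : List Bool).length := by
        refine ENNReal.tsum_le_tsum fun σ => ?_
        rw [← measure_cylinder]
        exact dens_le_iff.1 (hB σ σ.2.1)
    _ = q * weight (minStr B) := ENNReal.tsum_mul_left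

lemma measure_setOf_forall_le_dens_ne_zero {τ : List Bool} (h : q < dens τ P) :
    μCantor (cylinder τ ∩ {X | ∀ n, τ.length ≤ n → q ≤ dens (strPrefix X n) P}) ≠ 0 := by
  intro hzero
  refine h.not_ge (dens_le_iff.2 ?_)
  set B : Set (List Bool) := {σ | τ <+: σ ∧ dens σ P < q}
  have cover : cylinder τ ∩ P ⊆ openOf B ∩ P ∪
      cylinder τ ∩ {X | ∀ n, τ.length ≤ n → q ≤ dens (strPrefix X n) P} := by
    rintro X ⟨hτ, hP⟩
    by_cases hX : X ∈ openOf B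
    · exact Or.inl ⟨hX, hP⟩
    · refine Or.inr ⟨hτ, fun n hn => not_lt.1 fun hlt => hX ?_⟩
      exact mem_openOf_iff_strPrefix.2 ⟨n, (prefix_strPrefix_iff hn).2 hτ, hlt⟩
  have openOf_subset : openOf B ⊆ cylinder τ :=
    Set.iUnion₂_subset fun σ hσ => cylinder_subset_cylinder hσ.1
  calc μCantor (cylinder τ ∩ P)
      ≤ μCantor (openOf B ∩ P) := by
        simpa only [hzero, add_zero] using
          (measure_mono cover).trans (measure_union_le (μ := μCantor) _ _)
    _ ≤ q * μCantor (openOf B) := measure_openOf_inter_le fun σ hσ => hσ.2.le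
    _ ≤ q * μCantor (cylinder τ) := by gcongr

end Density

/-! ### Recursive enumerability -/

section Enumerability

variable {α β : Type*} [Primcodable α] [Primcodable β]

lemma exists_code_dom_eval_iff {p : α → Prop} (hp : REPred p) :
    ∃ c : Nat.Partrec.Code, ∀ a, (c.eval (Encodable.encode a)).Dom ↔ p a := by
  obtain ⟨c, hc⟩ := Nat.Partrec.Code.exists_code.1 hp
  exact ⟨c, fun a => by simp [hc, Part.assert]⟩

lemma exists_wEnum_encode_iff {p : α → Prop} (hp : REPred p) :
    ∃ e, ∀ a, WEnum e (Encodable.encode a) ↔ p a := by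
  obtain ⟨c, hc⟩ := exists_code_dom_eval_iff hp
  refine ⟨Encodable.encode c, fun a => ?_⟩
  rw [WEnum, Denumerable.ofNat_encode, hc]

lemma rePred_wEnum (e : ℕ) {f : α → ℕ} (hf : Computable f) : REPred fun a => WEnum e (f a) :=
  Partrec.dom_re (Nat.Partrec.Code.eval_part.comp (Computable.const _) hf)

lemma exists_primrecRel_of_rePred {p : α → Prop} (hp : REPred p) :
    ∃ D : α → ℕ → Prop, PrimrecRel D ∧ ∀ a, p a ↔ ∃ n, D a n := by
  obtain ⟨c, hc⟩ := exists_code_dom_eval_iff hp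
  refine ⟨fun a n => (c.evaln n (Encodable.encode a)).isSome = true, ?_, fun a => ?_⟩
  · exact Primrec.eq.comp (Primrec.option_isSome.comp (Nat.Partrec.Code.primrec_evaln.comp
      ((Primrec.snd.pair (Primrec.const c)).pair (Primrec.encode.comp Primrec.fst))))
      (Primrec.const true)
  · simp only [← hc, Part.dom_iff_mem, Nat.Partrec.Code.evaln_complete,
      Option.isSome_iff_exists, Option.mem_def]
    exact exists_comm

lemma rePred_exists_of_primrecRel {D : α → β → Prop} (hD : PrimrecRel D) :
    REPred fun a => ∃ b, D a b := by
  classical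
  have search : Partrec fun a =>
      Nat.rfindOpt fun n => (Encodable.decode n : Option β).bind fun b =>
        if D a b then some b else none :=
    Partrec.rfindOpt <| Primrec.to_comp <| Primrec.option_bind
      (Primrec.decode.comp Primrec.snd)
      (Primrec.ite (hD.comp (Primrec.fst.comp Primrec.fst) Primrec.snd)
        (Primrec.option_some.comp Primrec.snd) (Primrec.const none))
  refine search.dom_re.of_eq fun a => ?_
  simp only [Nat.rfindOpt_dom, Option.mem_def, Option.bind_eq_some_iff,
    Option.ite_none_right_eq_some]
  exact ⟨fun ⟨_, _, b, _, hb, _⟩ => ⟨b, hb⟩,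
    fun ⟨b, hb⟩ => ⟨_, b, b, Encodable.encodek b, hb, rfl⟩⟩

lemma rePred_exists {p : α → β → Prop} (hp : REPred fun x : α × β => p x.1 x.2) :
    REPred fun a => ∃ b, p a b := by
  obtain ⟨D, hD, hDp⟩ := exists_primrecRel_of_rePred hp
  have hD' : PrimrecRel fun (a : α) (x : β × ℕ) => D (a, x.1) x.2 :=
    hD.comp (Primrec.fst.pair (Primrec.fst.comp Primrec.snd)) (Primrec.snd.comp Primrec.snd)
  refine (rePred_exists_of_primrecRel hD').of_eq fun a => ?_
  simp only [hDp (a, _), Prod.exists]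

lemma exists_oracleComputes_iff {D : List Bool → α → ℕ → Prop}
    (hD : REPred fun x : List Bool × α × ℕ => D x.1 x.2.1 x.2.2) :
    ∃ e, ∀ X a m, OracleComputes e X (Encodable.encode a) m ↔
      ∃ σ : List Bool, X ∈ cylinder σ ∧ D σ a m := by
  obtain ⟨e, he⟩ := exists_wEnum_encode_iff hD
  exact ⟨e, fun X a m => exists_congr fun σ => and_congr_right' (he (σ, a, m))⟩

lemma exists_exists_oracleComputes_iff {p : α → Prop} (hp : REPred p) :
    ∃ e, ∀ X a, (∃ m, OracleComputes e X (Encodable.encode a) m) ↔ p a := by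
  obtain ⟨e, he⟩ := exists_oracleComputes_iff (D := fun _ a _ => p a)
    (hp.comp (Computable.fst.comp Computable.snd))
  refine ⟨e, fun X a => ?_⟩
  simp only [he]
  exact ⟨fun ⟨_, _, _, ha⟩ => ha, fun ha => ⟨0, [], fun i => i.elim0, ha⟩⟩

lemma exists_oracleComputes_comp_iff (e : ℕ) {f : α → ℕ → ℕ × ℕ} (hf : Primrec₂ f) :
    ∃ e', ∀ X a m,
      OracleComputes e' X (Encodable.encode a) m ↔ OracleComputes e X (f a m).1 (f a m).2 := by
  have output : Primrec fun x : List Bool × α × ℕ => f x.2.1 x.2.2 :=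
    hf.comp (Primrec.fst.comp Primrec.snd) (Primrec.snd.comp Primrec.snd)
  exact exists_oracleComputes_iff <| rePred_wEnum e <| Primrec.to_comp <|
    Primrec₂.natPair.comp (Primrec.encode.comp Primrec.fst)
      (Primrec₂.natPair.comp (Primrec.fst.comp output) (Primrec.snd.comp output))

end Enumerability

lemma exists_testLevel_eq {S : ℕ → Set (List Bool)}
    (hS : REPred fun x : ℕ × List Bool => x.2 ∈ S x.1) :
    ∃ e, ∀ A n, testLevel e A n = openOf (S n) := by
  obtain ⟨e, he⟩ := exists_exists_oracleComputes_iff hS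
  refine ⟨e, fun A n => congrArg openOf ?_⟩
  ext σ
  exact he A (n, σ)

lemma primrec_strPrefix_emptyOracle : Primrec (strPrefix emptyOracle) :=
  Primrec.list_map Primrec.list_range (Primrec.const false).to₂

lemma ceStr_iff_rePred {S : Set (List Bool)} : CeStr S ↔ REPred (· ∈ S) := by
  constructor
  · rintro ⟨e, he⟩
    have enum : REPred fun σ : List Bool => ∃ x : ℕ × ℕ, WEnum e (Nat.pair
        (Encodable.encode (strPrefix emptyOracle x.2)) (Nat.pair (Encodable.encode σ) x.1)) :=
      rePred_exists <| rePred_wEnum e <| Primrec.to_comp <| Primrec₂.natPair.comp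
        (Primrec.encode.comp (primrec_strPrefix_emptyOracle.comp (Primrec.snd.comp Primrec.snd)))
        (Primrec₂.natPair.comp (Primrec.encode.comp Primrec.fst) (Primrec.fst.comp Primrec.snd))
    refine enum.of_eq fun σ => ?_
    rw [he, Prod.exists]
    refine exists_congr fun m => ⟨fun ⟨l, h⟩ => ⟨_, mem_cylinder_strPrefix _ l, h⟩, ?_⟩
    rintro ⟨α, hα, h⟩
    exact ⟨α.length, by rwa [mem_cylinder_iff_strPrefix_eq.1 hα]⟩
  · intro hS
    obtain ⟨e, he⟩ := exists_exists_oracleComputes_iff hS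
    exact ⟨e, fun σ => (he emptyOracle σ).symm⟩

/-! ### `Π⁰₁` classes -/

lemma primrecPred_exists_lt_length {D : ℕ → List Bool → Prop} (hD : PrimrecRel D) :
    PrimrecPred fun σ : List Bool => ∃ i < σ.length, D i σ :=
  (hD.exists_mem_list.comp (Primrec.list_range.comp Primrec.list_length) Primrec.id).of_eq
    (by simp)

lemma primrecPred_mem_minStr {S : Set (List Bool)} (hS : PrimrecPred (· ∈ S)) :
    PrimrecPred (· ∈ minStr S) := by
  have proper_prefix : PrimrecPred fun σ : List Bool => ∃ i < σ.length, σ.take i ∈ S :=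
    primrecPred_exists_lt_length (hS.comp (Primrec.list_take.comp Primrec.fst Primrec.snd))
  exact hS.and (proper_prefix.not.of_eq (by simp))

section Pi01

variable {P P' : Set (ℕ → Bool)}

lemma pi01_compl_openOf {S : Set (List Bool)} (hS : REPred (· ∈ S)) : Pi01 (openOf S)ᶜ :=
  ⟨S, ceStr_iff_rePred.2 hS, rfl⟩

lemma Pi01.exists_primrecPred (hP : Pi01 P) :
    ∃ R : Set (List Bool), PrimrecPred (· ∈ R) ∧
      (∀ σ ρ, σ <+: ρ → σ ∈ R → ρ ∈ R) ∧ P = (openOf R)ᶜ := by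
  obtain ⟨S, hS, rfl⟩ := hP
  obtain ⟨D, hD, hDS⟩ := exists_primrecRel_of_rePred (ceStr_iff_rePred.1 hS)
  refine ⟨{ρ | ∃ w < ρ.length, D (ρ.take w.unpair.1) w.unpair.2}, ?_, ?_, ?_⟩
  · refine primrecPred_exists_lt_length (D := fun w ρ => D (ρ.take w.unpair.1) w.unpair.2) ?_
    have unpair : Primrec fun x : ℕ × List Bool => x.1.unpair := Primrec.unpair.comp Primrec.fst
    exact hD.comp (Primrec.list_take.comp (Primrec.fst.comp unpair) Primrec.snd)
      (Primrec.snd.comp unpair)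
  · rintro σ _ ⟨ν, rfl⟩ ⟨w, hw, h⟩
    refine ⟨w, hw.trans_le (by simp), ?_⟩
    rwa [List.take_append_of_le_length ((Nat.unpair_left_le w).trans hw.le)]
  · congr 1
    ext X
    simp only [mem_openOf_iff_strPrefix, hDS, Set.mem_ofPred_eq, length_strPrefix]
    constructor
    · rintro ⟨n, m, h⟩
      refine ⟨Nat.pair n m + 1, Nat.pair n m, Nat.lt_succ_self _, ?_⟩
      rwa [Nat.unpair_pair, take_strPrefix X ((Nat.left_le_pair n m).trans (Nat.le_succ _))]
    · rintro ⟨n, w, hw, h⟩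
      rw [take_strPrefix X ((Nat.unpair_left_le w).trans hw.le)] at h
      exact ⟨_, _, h⟩

lemma Pi01.inter (hP : Pi01 P) (hP' : Pi01 P') : Pi01 (P ∩ P') := by
  obtain ⟨R, hR, -, rfl⟩ := hP.exists_primrecPred
  obtain ⟨R', hR', -, rfl⟩ := hP'.exists_primrecPred
  rw [← Set.compl_union, ← openOf_union]
  exact pi01_compl_openOf (hR.or hR').computablePred.to_re

lemma pi01_cylinder (τ : List Bool) : Pi01 (cylinder τ) := by
  have compl_eq : cylinder τ = (openOf {σ | τ.length ≤ σ.length ∧ σ.take τ.length ≠ τ})ᶜ := by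
    ext X
    rw [Set.mem_compl_iff, mem_openOf_iff_strPrefix, mem_cylinder_iff_strPrefix_eq]
    refine ⟨fun h => ?_, fun h => ?_⟩
    · rintro ⟨n, hn, hne⟩
      rw [length_strPrefix] at hn
      exact hne (by rw [take_strPrefix X hn, h])
    · by_contra hne
      exact h ⟨τ.length, by simp, by rwa [take_strPrefix X le_rfl]⟩
  rw [compl_eq]
  have length_le : PrimrecPred fun σ : List Bool => τ.length ≤ σ.length :=
    Primrec.nat_le.comp (Primrec.const _) Primrec.list_length
  have take_eq : PrimrecPred fun σ : List Bool => σ.take τ.length = τ :=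
    Primrec.eq.comp (Primrec.list_take.comp (Primrec.const _) Primrec.id) (Primrec.const _)
  exact pi01_compl_openOf (length_le.and take_eq.not).computablePred.to_re

end Pi01

/-! ### Tails of random sequences -/

section Tails

variable {A X : ℕ → Bool}

lemma rePred_mem_pow {L : Language Bool} (hL : PrimrecPred (· ∈ L)) :
    REPred fun x : ℕ × List Bool => x.2 ∈ L ^ x.1 := by
  have factorization : PrimrecRel fun (x : ℕ × List Bool) (F : List (List Bool)) =>
      x.2 = F.flatten ∧ F.length = x.1 ∧ ∀ σ ∈ F, σ ∈ L :=
    (Primrec.eq.comp (Primrec.snd.comp Primrec.fst) (Primrec.list_flatten.comp Primrec.snd)).and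
      ((Primrec.eq.comp (Primrec.list_length.comp Primrec.snd) (Primrec.fst.comp Primrec.fst)).and
        (hL.forall_mem_list.comp Primrec.snd))
  exact (rePred_exists_of_primrecRel factorization).of_eq fun x => Language.mem_pow.symm

lemma MLRandom.exists_tailSeq_notMem_openOf (hX : MLRandom X) {L : Language Bool}
    (hL : PrimrecPred (· ∈ L)) (hw : weight L < 1) : ∃ k, tailSeq X k ∉ openOf L := by
  by_contra! hall
  obtain ⟨k, hk⟩ : ∃ k, weight L ^ k ≤ 2⁻¹ :=
    ((ENNReal.tendsto_pow_atTop_nhds_zero_of_lt_one hw).eventually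
      (ge_mem_nhds (by simp : (0 : ℝ≥0∞) < 2⁻¹))).exists
  obtain ⟨e, he⟩ := exists_testLevel_eq (S := fun n => (L ^ (n * k) : Language Bool))
    ((rePred_mem_pow hL).comp ((Primrec.nat_mul.comp Primrec.fst (Primrec.const k)).pair
      Primrec.snd).to_comp)
  have isTest : MLTestIn emptyOracle (testLevel e emptyOracle) := by
    refine ⟨⟨e, fun _ => rfl⟩, fun n => ?_⟩
    calc μCantor (testLevel e emptyOracle n)
        ≤ weight L ^ (n * k) := he emptyOracle n ▸ measure_openOf_pow_le L (n * k)
      _ = (weight L ^ k) ^ n := by rw [mul_comm, pow_mul]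
      _ ≤ 2⁻¹ ^ n := by gcongr
  obtain ⟨n, hn⟩ := hX _ isTest
  exact hn (he emptyOracle n ▸ tailSeq_mem_openOf_pow hall (n * k) 0)

lemma MLRandom.exists_tailSeq_mem (hX : MLRandom X) {P : Set (ℕ → Bool)} (hP : Pi01 P)
    (hμ : μCantor P ≠ 0) : ∃ k, tailSeq X k ∈ P := by
  obtain ⟨R, hR, -, rfl⟩ := hP.exists_primrecPred
  have weight_lt_one : weight (minStr R) < 1 := by
    rw [← measure_openOf (prefixFreeSet_minStr R), openOf_minStr]
    refine prob_le_one.lt_of_ne fun h => hμ ?_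
    exact (prob_compl_eq_zero_iff (isOpen_openOf R).measurableSet).2 h
  obtain ⟨k, hk⟩ :=
    hX.exists_tailSeq_notMem_openOf (L := minStr R) (primrecPred_mem_minStr hR) weight_lt_one
  exact ⟨k, openOf_minStr R ▸ hk⟩

/-- The strings `σ` such that some initial segment of `ξ ++ σ` lies in `S`; they generate the open
set of all `Y` for which the concatenation of `ξ` and `Y` lies in `openOf S`. -/
def strQuotient (ξ : List Bool) (S : Set (List Bool)) : Set (List Bool) :=
  {σ | ∃ i, (ξ ++ σ).take i ∈ S}

lemma tailSeq_mem_openOf_strQuotient {ξ : List Bool} {S : Set (List Bool)}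
    (hX : X ∈ cylinder ξ) :
    tailSeq X ξ.length ∈ openOf (strQuotient ξ S) ↔ X ∈ openOf S := by
  have concat (n : ℕ) : ξ ++ strPrefix (tailSeq X ξ.length) n = strPrefix X (ξ.length + n) := by
    rw [strPrefix_add, mem_cylinder_iff_strPrefix_eq.1 hX]
  simp only [mem_openOf_iff_strPrefix, strQuotient, Set.mem_ofPred_eq, concat]
  constructor
  · rintro ⟨n, i, h⟩
    rcases le_total i (ξ.length + n) with hi | hi
    · exact ⟨i, take_strPrefix X hi ▸ h⟩
    · rw [List.take_of_length_le (by simpa using hi)] at h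
      exact ⟨_, h⟩
  · rintro ⟨n, h⟩
    exact ⟨n, n, (take_strPrefix X (Nat.le_add_left n _)).symm ▸ h⟩

lemma measure_openOf_strQuotient (ξ : List Bool) (S : Set (List Bool)) :
    μCantor (openOf (strQuotient ξ S)) = dens ξ (openOf S) := by
  have inter_eq : cylinder ξ ∩ openOf S = openOf ((ξ ++ ·) '' strQuotient ξ S) := by
    ext Y
    rw [mem_openOf_append_image]
    exact and_congr_right fun hY => (tailSeq_mem_openOf_strQuotient hY).symm
  rw [dens, inter_eq, measure_openOf_append_image, mul_right_comm, two_inv_pow_mul_two_pow,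
    one_mul]

lemma exists_testLevel_eq_openOf_strQuotient (e k : ℕ) (ξ : List Bool) :
    ∃ e', ∀ A n, testLevel e' A n = openOf (strQuotient ξ
      {ρ | ∃ m, OracleComputes e A (Nat.pair (n + k) (Encodable.encode ρ)) m}) := by
  -- The output of the new functional codes the length `i` together with the old output.
  have input : Primrec fun x : (ℕ × List Bool) × ℕ =>
      Nat.pair (x.1.1 + k) (Encodable.encode ((ξ ++ x.1.2).take x.2.unpair.1)) := by
    refine Primrec₂.natPair.comp ?_ (Primrec.encode.comp (Primrec.list_take.comp ?_ ?_))
    · exact Primrec.nat_add.comp (Primrec.fst.comp Primrec.fst) (Primrec.const k)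
    · exact Primrec.fst.comp (Primrec.unpair.comp Primrec.snd)
    · exact Primrec.list_append.comp (Primrec.const ξ) (Primrec.snd.comp Primrec.fst)
  obtain ⟨e', he'⟩ := exists_oracleComputes_comp_iff e
    (f := fun (x : ℕ × List Bool) m =>
      (Nat.pair (x.1 + k) (Encodable.encode ((ξ ++ x.2).take m.unpair.1)), m.unpair.2))
    (input.pair (Primrec.snd.comp (Primrec.unpair.comp Primrec.snd)))
  refine ⟨e', fun A n => congrArg openOf ?_⟩
  ext σ
  refine (exists_congr (he' A (n, σ))).trans ⟨?_, ?_⟩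
  · rintro ⟨m, h⟩
    exact ⟨m.unpair.1, m.unpair.2, h⟩
  · rintro ⟨i, m, h⟩
    exact ⟨Nat.pair i m, by simpa only [Nat.unpair_pair] using h⟩

lemma MLRandomIn.of_tailSeq {k : ℕ} (h : MLRandomIn A (tailSeq X k)) : MLRandomIn A X := by
  rintro G ⟨⟨e, he⟩, hG⟩
  let ξ := strPrefix X k
  have length_ξ : ξ.length = k := length_strPrefix X k
  obtain ⟨e', he'⟩ := exists_testLevel_eq_openOf_strQuotient e k ξ
  have isTest : MLTestIn A (testLevel e' A) := by
    refine ⟨⟨e', fun _ => rfl⟩, fun n => ?_⟩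
    calc μCantor (testLevel e' A n)
        = μCantor (cylinder ξ ∩ G (n + k)) * 2 ^ k := by
          rw [he', measure_openOf_strQuotient, he, dens, length_ξ, testLevel]
      _ ≤ 2⁻¹ ^ (n + k) * 2 ^ k := by
          gcongr
          exact (measure_mono Set.inter_subset_right).trans (hG _)
      _ = 2⁻¹ ^ n := by rw [pow_add, mul_assoc, two_inv_pow_mul_two_pow, mul_one]
  obtain ⟨n, hn⟩ := h _ isTest
  refine ⟨n + k, fun hX => hn ?_⟩
  rw [he] at hX
  rw [he']
  simpa only [length_strPrefix] using
    (tailSeq_mem_openOf_strQuotient (mem_cylinder_strPrefix X k)).2 hX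

end Tails

/-! ### Approximating densities -/

/-- The list of all binary strings of a given length. -/
def allStr : ℕ → List (List Bool)
  | 0 => [[]]
  | n + 1 => (allStr n).map (List.cons false) ++ (allStr n).map (List.cons true)

lemma mem_allStr {n : ℕ} {σ : List Bool} : σ ∈ allStr n ↔ σ.length = n := by
  induction n generalizing σ with
  | zero => simp [allStr]
  | succ n ih =>
    cases σ with
    | nil => simp [allStr]
    | cons b σ => cases b <;> simp [allStr, ih]

lemma nodup_allStr (n : ℕ) : (allStr n).Nodup := by
  induction n with
  | zero => simp [allStr]
  | succ n ih =>
    refine (ih.map List.cons_injective).append (ih.map List.cons_injective) ?_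
    simp [List.disjoint_left]

lemma primrec_allStr : Primrec allStr := by
  have step : Primrec₂ fun (_ : ℕ) (L : List (List Bool)) =>
      L.map (List.cons false) ++ L.map (List.cons true) :=
    Primrec.list_append.comp
      (Primrec.list_map Primrec.snd (Primrec.list_cons.comp (Primrec.const false) Primrec.snd))
      (Primrec.list_map Primrec.snd (Primrec.list_cons.comp (Primrec.const true) Primrec.snd))
  refine (Primrec.nat_rec₁ [[]] step).of_eq fun n => ?_
  induction n with
  | zero => rfl
  | succ n ih => simp only [allStr, ← ih]

open Classical in
/-- The number of strings of length `t` that extend `σ` to a string outside `R`. -/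
noncomputable def extCount (R : Set (List Bool)) (σ : List Bool) (t : ℕ) : ℕ :=
  ((allStr t).filter (σ ++ · ∉ R)).length

lemma primrec_extCount {R : Set (List Bool)} (hR : PrimrecPred (· ∈ R)) :
    Primrec₂ (extCount R) := by
  classical
  have append_notMem : PrimrecRel fun ν σ : List Bool => σ ++ ν ∉ R :=
    PrimrecPred.not (hR.comp (Primrec.list_append.comp Primrec.snd Primrec.fst))
  refine (Primrec.list_length.comp (append_notMem.listFilter.comp
    (primrec_allStr.comp Primrec.snd) (Primrec.fst (α := List Bool) (β := ℕ)))).of_eq fun x => ?_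
  simp only [extCount]

lemma weight_eq_encard_mul {S : Set (List Bool)} {t : ℕ} (hS : ∀ σ ∈ S, σ.length = t) :
    weight S = S.encard * 2⁻¹ ^ t := by
  rw [weight, tsum_congr fun σ : S => by rw [hS σ σ.2], ENNReal.tsum_set_const]

section Density

variable {R : Set (List Bool)} {P : Set (ℕ → Bool)}

lemma encard_setOf_append_notMem (R : Set (List Bool)) (σ : List Bool) (t : ℕ) :
    {ν | ν.length = t ∧ σ ++ ν ∉ R}.encard = extCount R σ t := by
  classical
  have coe_toFinset : {ν | ν.length = t ∧ σ ++ ν ∉ R} =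
      ((allStr t).filter (σ ++ · ∉ R)).toFinset := by
    ext ν
    simp [mem_allStr]
  rw [coe_toFinset, Set.encard_coe_eq_coe_finsetCard,
    List.toFinset_card_of_nodup ((nodup_allStr t).filter _), extCount]

lemma cylinder_inter_setOf_strPrefix_notMem (R : Set (List Bool)) (σ : List Bool) (t : ℕ) :
    cylinder σ ∩ {X | strPrefix X (σ.length + t) ∉ R} =
      openOf ((σ ++ ·) '' {ν | ν.length = t ∧ σ ++ ν ∉ R}) := by
  ext X
  rw [mem_openOf_append_image]
  refine and_congr_right fun hX => ?_
  rw [Set.mem_ofPred_eq, strPrefix_add, mem_cylinder_iff_strPrefix_eq.1 hX,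
    mem_openOf_iff_strPrefix]
  simp

lemma dens_setOf_strPrefix_notMem (R : Set (List Bool)) (σ : List Bool) (t : ℕ) :
    dens σ {X | strPrefix X (σ.length + t) ∉ R} = extCount R σ t / 2 ^ t := by
  have prefixFree : PrefixFreeSet {ν | ν.length = t ∧ σ ++ ν ∉ R} :=
    fun ν hν ν' hν' h => h.eq_of_length (hν.1.trans hν'.1.symm)
  rw [dens, cylinder_inter_setOf_strPrefix_notMem, measure_openOf_append_image,
    measure_openOf prefixFree, weight_eq_encard_mul fun ν hν => hν.1, encard_setOf_append_notMem,
    mul_right_comm, two_inv_pow_mul_two_pow, one_mul, div_eq_mul_inv, ENNReal.inv_pow]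
  rfl

lemma dens_compl_openOf (hR : ∀ σ ρ, σ <+: ρ → σ ∈ R → ρ ∈ R) (σ : List Bool) :
    dens σ (openOf R)ᶜ = ⨅ t : ℕ, (extCount R σ t / 2 ^ t : ℝ≥0∞) := by
  let stage (t : ℕ) : Set (ℕ → Bool) := cylinder σ ∩ {X | strPrefix X (σ.length + t) ∉ R}
  have antitone_stage : Antitone stage := fun s t hst X hX =>
    ⟨hX.1, fun h => hX.2 (hR _ _ (strPrefix_prefix_strPrefix X (by lia)) h)⟩
  have measurable_stage (t : ℕ) : MeasurableSet (stage t) := by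
    simp only [stage, cylinder_inter_setOf_strPrefix_notMem]
    exact (isOpen_openOf _).measurableSet
  have iInter_stage : cylinder σ ∩ (openOf R)ᶜ = ⋂ t, stage t := by
    ext X
    rw [← Set.inter_iInter, Set.mem_inter_iff, Set.mem_inter_iff, Set.mem_compl_iff,
      mem_openOf_iff_strPrefix, not_exists, Set.mem_iInter]
    refine and_congr_right fun _ => ⟨fun h t => h _, fun h n hn => h n ?_⟩
    exact hR _ _ (strPrefix_prefix_strPrefix X (by lia)) hn
  rw [dens, iInter_stage, antitone_stage.measure_iInter
    (fun t => (measurable_stage t).nullMeasurableSet) ⟨0, measure_ne_top _ _⟩,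
    ENNReal.iInf_mul_of_ne (by simp) (ENNReal.pow_ne_top (by simp))]
  exact iInf_congr (dens_setOf_strPrefix_notMem R σ)

lemma natCast_div_two_pow_lt_iff {a K : ℕ} (hK : K ≠ 0) (c t : ℕ) :
    (c / 2 ^ t : ℝ≥0∞) < a / K ↔ c * K < a * 2 ^ t := by
  have two_pow_pos : (0 : NNReal) < 2 ^ t := by positivity
  have K_pos : (0 : NNReal) < K := by positivity
  have coe_left : (c / 2 ^ t : ℝ≥0∞) = (c / 2 ^ t : NNReal) := by
    rw [ENNReal.coe_div two_pow_pos.ne']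
    push_cast
    rfl
  have coe_right : (a / K : ℝ≥0∞) = (a / K : NNReal) := by
    rw [ENNReal.coe_div K_pos.ne']
    push_cast
    rfl
  rw [coe_left, coe_right, ENNReal.coe_lt_coe, div_lt_div_iff₀ two_pow_pos K_pos]
  exact_mod_cast Iff.rfl

lemma primrec_two_pow : Primrec fun t : ℕ => 2 ^ t :=
  (Primrec₂.unpaired'.1 Nat.Primrec.pow).comp (Primrec.const 2) Primrec.id

lemma Pi01.rePred_dens_lt (hP : Pi01 P) (a : ℕ) {K : ℕ} (hK : K ≠ 0) :
    REPred fun σ => dens σ P < a / K := by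
  obtain ⟨R, hR, hmono, rfl⟩ := hP.exists_primrecPred
  have matrix : PrimrecRel fun (σ : List Bool) (t : ℕ) => extCount R σ t * K < a * 2 ^ t :=
    Primrec.nat_lt.comp (Primrec.nat_mul.comp (primrec_extCount hR) (Primrec.const K))
      (Primrec.nat_mul.comp (Primrec.const a) (primrec_two_pow.comp Primrec.snd))
  refine (rePred_exists_of_primrecRel matrix).of_eq fun σ => ?_
  simp only [dens_compl_openOf hmono, iInf_lt_iff, natCast_div_two_pow_lt_iff hK]

lemma Pi01.setOf_forall_le_dens (hP : Pi01 P) (k a : ℕ) {K : ℕ} (hK : K ≠ 0) :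
    Pi01 {X | ∀ n, k ≤ n → a / K ≤ dens (strPrefix X n) P} := by
  have compl_eq : {X | ∀ n, k ≤ n → a / K ≤ dens (strPrefix X n) P} =
      (openOf {σ | k ≤ σ.length ∧ dens σ P < a / K})ᶜ := by
    ext X
    simp [mem_openOf_iff_strPrefix]
  obtain ⟨D, hD, hDP⟩ := exists_primrecRel_of_rePred (hP.rePred_dens_lt a hK)
  have matrix : PrimrecRel fun (σ : List Bool) t => k ≤ σ.length ∧ D σ t :=
    PrimrecPred.and (Primrec.nat_le.comp (Primrec.const k) (Primrec.list_length.comp Primrec.fst))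
      hD
  rw [compl_eq]
  exact pi01_compl_openOf ((rePred_exists_of_primrecRel matrix).of_eq fun σ => by simp [hDP])

end Density

/-! ### The extension lemma -/

lemma exists_natCast_div_natCast_btwn {x y : ℝ≥0∞} (h : x < y) :
    ∃ a K : ℕ, K ≠ 0 ∧ x < a / K ∧ a / K < y := by
  obtain ⟨q, hq, hxq, hqy⟩ := ENNReal.lt_iff_exists_rat_btwn.1 h
  lift q to ℚ≥0 using hq
  have coe_eq : ((Real.toNNReal ((q : ℚ) : ℝ) : NNReal) : ℝ≥0∞) = q.num / q.den := by
    have : Real.toNNReal ((q : ℚ) : ℝ) = (q.num / q.den : NNReal) := by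
      rw [← NNRat.cast_def]
      ext
      rw [Real.coe_toNNReal _ (by exact_mod_cast q.2)]
      rfl
    rw [this, ENNReal.coe_div (by simp), ENNReal.coe_natCast, ENNReal.coe_natCast]
  rw [coe_eq] at hxq hqy
  exact ⟨q.num, q.den, q.den_ne_zero, hxq, hqy⟩

lemma MLRandom.exists_prefix_lt_dens {X : ℕ → Bool} (hX : MLRandom X) {P Q : Set (ℕ → Bool)}
    (hP : Pi01 P) (hQ : IsClosed Q) (hXQ : ∀ k, tailSeq X k ∉ Q) {τ : List Bool} {ε : ℝ≥0∞}
    (h : ε < dens τ P) : ∃ ρ, τ <+: ρ ∧ cylinder ρ ∩ Q = ∅ ∧ ε < dens ρ P := by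
  obtain ⟨a, K, hK, hε, hlt⟩ := exists_natCast_div_natCast_btwn h
  obtain ⟨k, hτ, hdens⟩ := hX.exists_tailSeq_mem
    ((pi01_cylinder τ).inter (hP.setOf_forall_le_dens τ.length a hK))
    (measure_setOf_forall_le_dens_ne_zero hlt)
  obtain ⟨n, hn⟩ := exists_cylinder_strPrefix_inter_eq_empty hQ (hXQ k)
  refine ⟨strPrefix (tailSeq X k) (max n τ.length), ?_, ?_, hε.trans_le (hdens _ (by simp))⟩
  · exact (prefix_strPrefix_iff (le_max_right _ _)).2 hτ
  · refine Set.subset_empty_iff.1 (hn ▸ Set.inter_subset_inter_left Q ?_)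
    exact cylinder_subset_cylinder (strPrefix_prefix_strPrefix _ (le_max_left _ _))

theorem stmt8_general {A : ℕ → Bool} (hA : ¬ ∀ X : ℕ → Bool, MLRandom X → MLRandomIn A X)
    {P Q : Set (ℕ → Bool)} (hP : Pi01 P) (hQ : IsClosed Q) (hQrand : ∀ X ∈ Q, MLRandomIn A X)
    {τ : List Bool} {ε : ℝ≥0∞} (h : ε < dens τ P) :
    ∃ ρ : List Bool, τ <+: ρ ∧ cylinder ρ ∩ Q = ∅ ∧ ε < dens ρ P := by
  push Not at hA
  obtain ⟨X, hX, hXA⟩ := hA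
  exact hX.exists_prefix_lt_dens hP hQ (fun k hk => hXA (hQrand _ hk).of_tailSeq) h

/-- extension lemma: if `A` is not low for ML-randomness, one can
extend `τ` to a string `ρ` out of `Q` while keeping half the density in `P`. -/
theorem stmt8 (A : ℕ → Bool)
    (hA : ¬ ∀ X : ℕ → Bool, MLRandom X → MLRandomIn A X)
    (P Q : Set (ℕ → Bool)) (hP : Pi01 P)
    (hQ : Pi01In A Q) (hQrand : ∀ X ∈ Q, MLRandomIn A X)
    (τ : List Bool) (δ : ℝ≥0∞) (hδ : 0 < δ) (hd : δ ≤ dens τ P) :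
    ∃ ρ : List Bool, τ <+: ρ ∧ cylinder ρ ∩ Q = ∅ ∧ δ / 2 ≤ dens ρ P := by
  have half_lt : δ / 2 < dens τ P :=
    (ENNReal.half_lt_self hδ.ne' (ne_top_of_le_ne_top (dens_ne_top τ P) hd)).trans_le hd
  obtain ⟨ρ, hτρ, hρQ, hρ⟩ := stmt8_general hA hP hQ.isClosed hQrand half_lt
  exact ⟨ρ, hτρ, hρQ, hρ.le⟩
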